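/- Let X ∈ ℝ^{d₁×d₂}, let I ⊆ [d₁] and J ⊆ [d₂] be index sets, and set C = X[:,J] (the columns of X indexed by J), R = X[I,:] (the rows of X indexed by I), and U = X[I,J]. If rank(U) = rank(X), then X = C U† R, where U† denotes the Moore–Penrose pseudoinverse of U. -/

import Mathlib

open scoped Matrix

/-- `B` satisfies the four Penrose conditions for being the Moore–Penrose pseudoinverse
of the real matrix `A`. -/
def IsMoorePenrose {m n : Type*} [Fintype m] [Fintype n]
    (A : Matrix m n ℝ) (B : Matrix n m ℝ) : Prop :=
  A * B * A = A ∧ B * A * B = B ∧ (A * B)ᵀ = A * B ∧ (B * A)ᵀ = B * A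

/-- The Moore–Penrose pseudoinverse `A†` of a real matrix, characterized (uniquely) by the
four Penrose conditions. -/
noncomputable def pinv {m n : Type*} [Fintype m] [Fintype n]
    (A : Matrix m n ℝ) : Matrix n m ℝ :=
  by classical exact if h : ∃ B, IsMoorePenrose A B then h.choose else 0

/-!
Let `G` be any matrix with `U * G * U = U`. Equality of the ranks of `U`, `C` and `X` says two
things: the columns of `X` are combinations of those of `C`, so `X = C * D` and, restricting to the
rows in `I`, `R = U * D`; and `U` has the same kernel as `C`, so
`U * (G * R) = U * G * U * D = U * D` lifts to `C * (G * R) = C * D = X`.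

That `U†` is such a `G` requires the pseudoinverse to exist. As `A`, `Aᵀ * A` and `A * Aᵀ` have the
same rank over an ordered field, `Aᵀ * A * D = Aᵀ` and `F * (A * Aᵀ) = Aᵀ` are solvable, and
`F * A * D` satisfies the Penrose conditions.
-/

section RangeKer

variable {K l m n p q : Type*} [Fintype n] [Fintype q]

theorem exists_mul_eq_of_range_mulVecLin_le [CommSemiring K] {A : Matrix m n K} {B : Matrix m q K}
    (h : LinearMap.range A.mulVecLin ≤ LinearMap.range B.mulVecLin) :
    ∃ D : Matrix q n K, B * D = A := by
  classical
  have col_mem (j : n) : ∃ v, B *ᵥ v = A.col j :=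
    h ⟨Pi.single j 1, by rw [Matrix.mulVecLin_apply, Matrix.mulVec_single_one]⟩
  choose v hv using col_mem
  exact ⟨Matrix.of fun k j => v j k, Matrix.ext fun i j => congrFun (hv j) i⟩

theorem mul_eq_mul_of_ker_mulVecLin_le [CommRing K] {A : Matrix m n K} {B : Matrix p n K}
    (h : LinearMap.ker B.mulVecLin ≤ LinearMap.ker A.mulVecLin) {M N : Matrix n l K}
    (hB : B * M = B * N) : A * M = A * N := by
  have col_sub_mem (j : l) : M.col j - N.col j ∈ LinearMap.ker B.mulVecLin :=
    LinearMap.sub_mem_ker_iff.2 (funext fun i => congrFun₂ hB i j)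
  ext i j
  exact congrFun (LinearMap.sub_mem_ker_iff.1 (h (col_sub_mem j))) i

theorem range_mulVecLin_submatrix_of_rank_eq [Field K] {A : Matrix m n K} {c : q → n}
    (h : (A.submatrix id c).rank = A.rank) :
    LinearMap.range (A.submatrix id c).mulVecLin = LinearMap.range A.mulVecLin := by
  refine Submodule.eq_of_le_of_finrank_eq ?_ h
  rw [Matrix.range_mulVecLin, Matrix.range_mulVecLin]
  exact Submodule.span_mono (Set.range_comp_subset_range c A.col)

theorem ker_mulVecLin_submatrix_of_rank_eq [Field K] {A : Matrix m n K} {r : p → m}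
    (h : (A.submatrix r id).rank = A.rank) :
    LinearMap.ker (A.submatrix r id).mulVecLin = LinearMap.ker A.mulVecLin := by
  have ker_le : LinearMap.ker A.mulVecLin ≤ LinearMap.ker (A.submatrix r id).mulVecLin :=
    fun v hv => funext fun i => congrFun hv (r i)
  refine (Submodule.eq_of_le_of_finrank_eq ker_le ?_).symm
  have rank_nullity := A.mulVecLin.finrank_range_add_finrank_ker
  have rank_nullity_sub := (A.submatrix r id).mulVecLin.finrank_range_add_finrank_ker
  rw [← Matrix.rank] at rank_nullity rank_nullity_sub
  lia

end RangeKer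

section MoorePenrose

variable {K m n : Type*} [Fintype m] [Fintype n]

theorem isSymm_mul_of_transpose_mul_mul_eq [CommSemiring K] {A : Matrix m n K} {D : Matrix n m K}
    (h : Aᵀ * A * D = Aᵀ) : (A * D).IsSymm := by
  have gram : (A * D)ᵀ * (A * D) = (A * D)ᵀ := by
    rw [Matrix.transpose_mul, Matrix.mul_assoc, ← Matrix.mul_assoc Aᵀ, h]
  rw [← Matrix.isSymm_transpose_iff, ← gram]
  exact Matrix.isSymm_transpose_mul_self _

theorem mul_mul_eq_of_transpose_mul_mul_eq [CommSemiring K] {A : Matrix m n K} {D : Matrix n m K}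
    (h : Aᵀ * A * D = Aᵀ) : A * D * A = A := by
  rw [← Matrix.transpose_inj, Matrix.transpose_mul, isSymm_mul_of_transpose_mul_mul_eq h,
    ← Matrix.mul_assoc, h]

theorem range_mulVecLin_transpose_mul_self [Field K] [LinearOrder K] [IsStrictOrderedRing K]
    (A : Matrix m n K) :
    LinearMap.range (Aᵀ * A).mulVecLin = LinearMap.range Aᵀ.mulVecLin := by
  refine Submodule.eq_of_le_of_finrank_eq ?_ ?_
  · rw [Matrix.mulVecLin_mul]
    exact LinearMap.range_comp_le_range _ _
  · exact A.rank_transpose_mul_self.trans A.rank_transpose.symm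

theorem exists_mul_mul_eq_and_isSymm_mul_right [Field K] [LinearOrder K] [IsStrictOrderedRing K]
    (A : Matrix m n K) : ∃ D : Matrix n m K, A * D * A = A ∧ (A * D).IsSymm := by
  obtain ⟨D, hD⟩ : ∃ D, Aᵀ * A * D = Aᵀ :=
    exists_mul_eq_of_range_mulVecLin_le (range_mulVecLin_transpose_mul_self A).ge
  exact ⟨D, mul_mul_eq_of_transpose_mul_mul_eq hD, isSymm_mul_of_transpose_mul_mul_eq hD⟩

theorem exists_mul_mul_eq_and_isSymm_mul_left [Field K] [LinearOrder K] [IsStrictOrderedRing K]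
    (A : Matrix m n K) : ∃ F : Matrix n m K, A * F * A = A ∧ (F * A).IsSymm := by
  obtain ⟨E, hE, symm_E⟩ := exists_mul_mul_eq_and_isSymm_mul_right Aᵀ
  refine ⟨Eᵀ, ?_, ?_⟩
  · rw [← Matrix.transpose_inj]
    simpa [Matrix.mul_assoc] using hE
  · simpa using symm_E.transpose

theorem isMoorePenrose_mul_mul {A : Matrix m n ℝ} {D F : Matrix n m ℝ}
    (hD : A * D * A = A) (symm_AD : (A * D).IsSymm)
    (hF : A * F * A = A) (symm_FA : (F * A).IsSymm) : IsMoorePenrose A (F * A * D) := by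
  have left_mul : A * (F * A * D) = A * D := by
    rw [← Matrix.mul_assoc, ← Matrix.mul_assoc, hF]
  have right_mul : F * A * D * A = F * A := by
    rw [Matrix.mul_assoc, Matrix.mul_assoc, ← Matrix.mul_assoc A, hD]
  refine ⟨?_, ?_, ?_, ?_⟩
  · rw [left_mul, hD]
  · rw [right_mul, Matrix.mul_assoc, left_mul, Matrix.mul_assoc]
  · rw [left_mul, symm_AD]
  · rw [right_mul, symm_FA]

theorem isMoorePenrose_pinv (A : Matrix m n ℝ) : IsMoorePenrose A (pinv A) := by
  obtain ⟨D, hD, symm_AD⟩ := exists_mul_mul_eq_and_isSymm_mul_right A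
  obtain ⟨F, hF, symm_FA⟩ := exists_mul_mul_eq_and_isSymm_mul_left A
  have exists_inverse : ∃ B, IsMoorePenrose A B := ⟨_, isMoorePenrose_mul_mul hD symm_AD hF symm_FA⟩
  rw [pinv, dif_pos exists_inverse]
  exact exists_inverse.choose_spec

end MoorePenrose

theorem matrix_pseudoskeleton_general {K m n p q : Type*} [Field K] [Fintype n] [Fintype p]
    [Fintype q] (X : Matrix m n K) (r : p → m) (c : q → n) (G : Matrix q p K)
    (hG : X.submatrix r c * G * X.submatrix r c = X.submatrix r c)
    (hrank : (X.submatrix r c).rank = X.rank) :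
    X = X.submatrix id c * G * X.submatrix r id := by
  set C := X.submatrix id c
  set R := X.submatrix r id
  set U := X.submatrix r c
  have rank_U_le : U.rank ≤ C.rank := C.rank_submatrix_le r id
  have rank_C_le : C.rank ≤ X.rank := X.rank_submatrix_le id c
  have rank_C : C.rank = X.rank := rank_C_le.antisymm (hrank ▸ rank_U_le)
  have rank_U : U.rank = C.rank := hrank.trans rank_C.symm
  obtain ⟨D, hCD⟩ : ∃ D, C * D = X :=
    exists_mul_eq_of_range_mulVecLin_le (range_mulVecLin_submatrix_of_rank_eq rank_C).ge
  have hUD : U * D = R := congrArg (Matrix.submatrix · r id) hCD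
  have ker_U : LinearMap.ker U.mulVecLin = LinearMap.ker C.mulVecLin :=
    ker_mulVecLin_submatrix_of_rank_eq (A := C) (r := r) rank_U
  have hUGR : U * (G * R) = U * D := by
    rw [← hUD, ← Matrix.mul_assoc, ← Matrix.mul_assoc, hG]
  calc X = C * D := hCD.symm
    _ = C * (G * R) := (mul_eq_mul_of_ker_mulVecLin_le ker_U.le hUGR).symm
    _ = C * G * R := (Matrix.mul_assoc C G R).symm

/-- Matrix pseudoskeleton (CUR) decomposition: if `U = X[I,J]` has the same rank as `X`,
then `X = C U† R`, where `C = X[:,J]` and `R = X[I,:]`. -/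
theorem matrix_pseudoskeleton {d₁ d₂ : ℕ} (X : Matrix (Fin d₁) (Fin d₂) ℝ)
    (I : Finset (Fin d₁)) (J : Finset (Fin d₂)) :
    let C : Matrix (Fin d₁) {j // j ∈ J} ℝ :=
      X.submatrix id (fun j : {j // j ∈ J} => (j : Fin d₂))
    let R : Matrix {i // i ∈ I} (Fin d₂) ℝ :=
      X.submatrix (fun i : {i // i ∈ I} => (i : Fin d₁)) id
    let U : Matrix {i // i ∈ I} {j // j ∈ J} ℝ :=
      X.submatrix (fun i : {i // i ∈ I} => (i : Fin d₁)) (fun j : {j // j ∈ J} => (j : Fin d₂))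
    U.rank = X.rank → X = C * pinv U * R := by
  intro _ _ U hrank
  exact matrix_pseudoskeleton_general X _ _ (pinv U) (isMoorePenrose_pinv U).1 hrank
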